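/- arXiv:1007.4621 — 2 statements merged into one kernel-verified Lean document; each statement's English description precedes it below -/
import Mathlib

section
/- There is an absolute constant C > 0 such that for every prime power q and every integer s ≥ 4, one has H(s) ≤ C · (4 s log log s / (√q · log s))^s. -/
/-!
Attach independent uniform signs `ε P` to finitely many primes `P` and extend them completely
multiplicatively to a random function `χ`. The expectation of `χ f` is `1` when `f` is a nonzero
square and is nonnegative for every `f`, because `ε ↦ χ f` is a character of the group of signs.
Hence a finite sum of `∏ i, w (f i)` over tuples with square product is at most the `s`-th moment
of `X = ∑ f, χ f * w f`. Here `w f = Λ(f) / (|f| deg f)`; the last factor in `H(s)` is at most `1`.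

The primes contribute to `X` the Rademacher sum `∑ P, ε P / |P|`, of variance
`∑ P, |P|⁻² ≤ 2 / q`, and the higher prime powers contribute at most `∑ P, |P|⁻² ≤ 2 / q`.
Since `cosh t ≤ exp (t² / 2)` and `|X| ^ s ≤ s! z⁻ˢ exp (z |X|)`, this yields
`H(s) ≤ 2 s! z⁻ˢ exp ((2 z + z²) / q)` for every `z > 0`. Taking `z = √(s q)` gives
`H(s) ≤ 2 (e³ √s / √q) ^ s`, which beats the bound sought as soon as `s` is large, since
`√s log s = o(s)`; the remaining finitely many `s` only affect the constant, because
`log log s > 0`.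
-/

open Polynomial

open Classical in
/-- The function-field von Mangoldt function: `Λ(f) = deg P` if `f = P^k` is a positive
power of a monic irreducible polynomial `P`, and `Λ(f) = 0` otherwise. -/
noncomputable def vonMangoldt {Fq : Type} [Field Fq] (f : Polynomial Fq) : ℝ :=
  if h : ∃ P : Polynomial Fq, ∃ k : ℕ, P.Monic ∧ Irreducible P ∧ 1 ≤ k ∧ f = P ^ k
  then (h.choose.natDegree : ℝ)
  else 0

/-- `H(s)`: the sum of `(∏ i, Λ(f i) q^(-deg f i) / deg (f i)) · ∏_{P ∣ f 1 ⋯ f s} (1+|P|⁻¹)⁻¹`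
over all `s`-tuples of monic polynomials of positive degree in `Fq[X]` whose product is a
square, where the inner product runs over monic irreducible polynomials dividing the
product and `|P| = q^(deg P)`. -/
noncomputable def Hfun (Fq : Type) [Field Fq] [Fintype Fq] (s : ℕ) : ℝ :=
  ∑' f : {f : Fin s → Polynomial Fq //
      (∀ i, (f i).Monic ∧ 0 < (f i).natDegree) ∧ IsSquare (∏ i, f i)},
    (∏ i, vonMangoldt (f.1 i) * ((Fintype.card Fq : ℝ) ^ (f.1 i).natDegree)⁻¹ /
        ((f.1 i).natDegree : ℝ)) *
      ∏ᶠ P ∈ {P : Polynomial Fq | P.Monic ∧ Irreducible P ∧ P ∣ ∏ i, f.1 i},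
        (1 + ((Fintype.card Fq : ℝ) ^ P.natDegree)⁻¹)⁻¹

section RandomSigns

open Finset Real BigOperators

variable {ι : Type*} [Fintype ι]

/-- The sum `∑ i, ε i * x i` of the real numbers `x i` with signs `ε i`, as a function of `ε`. When
`ι → ℤˣ` carries the uniform probability, whose expectation is `𝔼 ε, _`, this is a sum of
independent symmetric random variables. -/
def rademacherSum (x : ι → ℝ) (ε : ι → ℤˣ) : ℝ :=
  ∑ i, ((ε i : ℤ) : ℝ) * x i

theorem rademacherSum_const_mul (z : ℝ) (x : ι → ℝ) (ε : ι → ℤˣ) :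
    rademacherSum (fun i ↦ z * x i) ε = z * rademacherSum x ε := by
  simp only [rademacherSum, mul_left_comm, mul_sum]

variable [DecidableEq ι]

theorem expect_exp_rademacherSum (x : ι → ℝ) :
    𝔼 ε, exp (rademacherSum x ε) = ∏ i, cosh (x i) := by
  have hsign (t : ℝ) : ∑ u : ℤˣ, exp (((u : ℤ) : ℝ) * t) = 2 * cosh t := by
    rw [show (univ : Finset ℤˣ) = {1, -1} from rfl, sum_pair (by decide), cosh_eq]
    simp
    ring
  have hsum : ∑ ε, exp (rademacherSum x ε) = 2 ^ Fintype.card ι * ∏ i, cosh (x i) :=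
    calc ∑ ε, exp (rademacherSum x ε) = ∏ i, ∑ u : ℤˣ, exp (((u : ℤ) : ℝ) * x i) := by
          simp only [rademacherSum, exp_sum, Fintype.prod_sum]
      _ = 2 ^ Fintype.card ι * ∏ i, cosh (x i) := by
          simp only [hsign, prod_mul_distrib, prod_const, card_univ]
  rw [Fintype.expect_eq_sum_div_card, hsum, Fintype.card_fun, Fintype.card_units_int]
  field_simp
  simp

theorem expect_exp_rademacherSum_le (x : ι → ℝ) :
    𝔼 ε, exp (rademacherSum x ε) ≤ exp ((∑ i, x i ^ 2) / 2) := by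
  rw [expect_exp_rademacherSum, sum_div, exp_sum]
  exact prod_le_prod (fun i _ ↦ (cosh_pos _).le) fun i _ ↦ cosh_le_exp_half_sq (x i)

theorem expect_exp_abs_rademacherSum_le (x : ι → ℝ) :
    𝔼 ε, exp |rademacherSum x ε| ≤ 2 * exp ((∑ i, x i ^ 2) / 2) := by
  have hneg (ε : ι → ℤˣ) : -rademacherSum x ε = rademacherSum (fun i ↦ -x i) ε := by
    simp [rademacherSum]
  calc 𝔼 ε, exp |rademacherSum x ε|
      ≤ 𝔼 ε, (exp (rademacherSum x ε) + exp (rademacherSum (fun i ↦ -x i) ε)) :=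
        expect_le_expect fun ε _ ↦ hneg ε ▸ exp_abs_le _
    _ ≤ exp ((∑ i, x i ^ 2) / 2) + exp ((∑ i, (-x i) ^ 2) / 2) := by
        rw [expect_add_distrib]
        exact add_le_add (expect_exp_rademacherSum_le _) (expect_exp_rademacherSum_le _)
    _ = 2 * exp ((∑ i, x i ^ 2) / 2) := by
        simp only [neg_sq, two_mul]

theorem pow_le_factorial_div_pow_mul_exp {z : ℝ} (hz : 0 < z) (t : ℝ) (s : ℕ) :
    t ^ s ≤ s.factorial / z ^ s * exp (z * |t|) :=
  calc t ^ s ≤ |t| ^ s := (le_abs_self _).trans_eq (abs_pow t s)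
    _ = s.factorial / z ^ s * ((z * |t|) ^ s / s.factorial) := by
        rw [mul_pow]
        field_simp
    _ ≤ s.factorial / z ^ s * exp (z * |t|) := by
        gcongr
        exact pow_div_factorial_le_exp _ (by positivity) s

theorem expect_pow_le_of_abs_sub_rademacherSum_le {x : ι → ℝ} {X : (ι → ℤˣ) → ℝ} {B z : ℝ}
    (hz : 0 < z) (hX : ∀ ε, |X ε - rademacherSum x ε| ≤ B) (s : ℕ) :
    𝔼 ε, X ε ^ s ≤
      2 * (s.factorial / z ^ s * exp (z * B + z ^ 2 * (∑ i, x i ^ 2) / 2)) := by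
  have hpow (ε : ι → ℤˣ) : X ε ^ s ≤
      s.factorial / z ^ s * exp (z * B) * exp |rademacherSum (fun i ↦ z * x i) ε| := by
    have habs : |X ε| ≤ B + |rademacherSum x ε| := by
      linarith [hX ε, abs_sub_abs_le_abs_sub (X ε) (rademacherSum x ε)]
    calc X ε ^ s ≤ s.factorial / z ^ s * exp (z * |X ε|) :=
          pow_le_factorial_div_pow_mul_exp hz _ s
      _ ≤ s.factorial / z ^ s * exp (z * (B + |rademacherSum x ε|)) := by gcongr
      _ = _ := by
          rw [rademacherSum_const_mul, abs_mul, abs_of_pos hz, mul_add, exp_add, mul_assoc]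
  calc 𝔼 ε, X ε ^ s
      ≤ s.factorial / z ^ s * exp (z * B) *
          𝔼 ε, exp |rademacherSum (fun i ↦ z * x i) ε| := by
        rw [mul_expect]
        exact expect_le_expect fun ε _ ↦ hpow ε
    _ ≤ s.factorial / z ^ s * exp (z * B) * (2 * exp ((∑ i, (z * x i) ^ 2) / 2)) := by
        gcongr
        exact expect_exp_abs_rademacherSum_le _
    _ = 2 * (s.factorial / z ^ s * exp (z * B + z ^ 2 * (∑ i, x i ^ 2) / 2)) := by
        simp only [mul_pow, ← mul_sum, exp_add]
        ring

end RandomSigns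

section SignCharacter

open Finset UniqueFactorizationMonoid BigOperators

variable {ι α : Type*} [CommMonoidWithZero α] [Nontrivial α] [NormalizationMonoid α]
  [UniqueFactorizationMonoid α]

open Classical in
/-- The completely multiplicative function on a unique factorization monoid that takes the sign
`ε i` at the prime `p i` and `1` at every prime outside the range of `p`. It is the analogue, with
prescribed signs, of the Liouville function, and is extended by `0` at `0`. -/
noncomputable def signCharacter (p : ι → α) (ε : ι → ℤˣ) : α →*₀ ℝ where
  toFun a :=
    if a = 0 then 0 else (((normalizedFactors a).map (Function.extend p ε 1)).prod : ℤˣ)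
  map_zero' := if_pos rfl
  map_one' := by simp
  map_mul' a b := by
    by_cases ha : a = 0
    · simp [ha]
    by_cases hb : b = 0
    · simp [hb]
    simp [ha, hb, normalizedFactors_mul ha hb]

theorem signCharacter_apply_of_ne_zero (p : ι → α) (ε : ι → ℤˣ) {a : α} (ha : a ≠ 0) :
    signCharacter p ε a =
      (((normalizedFactors a).map (Function.extend p ε 1)).prod : ℤˣ) :=
  if_neg ha

theorem signCharacter_apply_of_irreducible {p : ι → α} (hp : p.Injective) (ε : ι → ℤˣ) {i : ι}
    (hi : Irreducible (p i)) (hi' : normalize (p i) = p i) : signCharacter p ε (p i) = ε i := by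
  rw [signCharacter_apply_of_ne_zero p ε hi.ne_zero, normalizedFactors_irreducible hi, hi',
    Multiset.map_singleton, Multiset.prod_singleton, hp.extend_apply]

theorem abs_signCharacter_of_ne_zero (p : ι → α) (ε : ι → ℤˣ) {a : α} (ha : a ≠ 0) :
    |signCharacter p ε a| = 1 := by
  rw [signCharacter_apply_of_ne_zero p ε ha]
  generalize ((normalizedFactors a).map (Function.extend p ε 1)).prod = u
  obtain rfl | rfl := Int.units_eq_one_or u <;> simp

theorem signCharacter_of_isSquare (p : ι → α) (ε : ι → ℤˣ) {a : α} (ha : a ≠ 0)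
    (hsq : IsSquare a) : signCharacter p ε a = 1 := by
  obtain ⟨b, rfl⟩ := hsq
  rw [map_mul, ← abs_mul_abs_self, abs_signCharacter_of_ne_zero p ε (left_ne_zero_of_mul ha),
    one_mul]

theorem expect_signCharacter_nonneg [Fintype ι] [DecidableEq ι] (p : ι → α) (a : α) :
    0 ≤ 𝔼 ε : ι → ℤˣ, signCharacter p ε a := by
  classical
  obtain rfl | ha := eq_or_ne a 0
  · simp
  let χ : (ι → ℤˣ) →* ℝ :=
    { toFun := fun ε ↦ signCharacter p ε a
      map_one' := by simp [signCharacter_apply_of_ne_zero p _ ha, Function.extend_one]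
      map_mul' := fun ε δ ↦ by
        have hext : Function.extend p (ε * δ) 1 = Function.extend p ε 1 * Function.extend p δ 1 :=
          map_mul (Function.ExtendByOne.hom ℤˣ p) ε δ
        simp [signCharacter_apply_of_ne_zero p _ ha, hext, Multiset.prod_map_mul] }
  have hsum : 0 ≤ ∑ ε, χ ε := by
    rw [sum_hom_units χ]
    positivity
  rw [Fintype.expect_eq_sum_div_card]
  exact div_nonneg hsum (Nat.cast_nonneg _)

theorem sum_prod_le_expect_sum_signCharacter_pow [Fintype ι] [DecidableEq ι] (p : ι → α)
    {w : α → ℝ} (hw : ∀ a, 0 ≤ w a) {s : ℕ} {S : Finset α} {U : Finset (Fin s → α)}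
    (hUS : ∀ f ∈ U, ∀ i, f i ∈ S) (hU : ∀ f ∈ U, ∏ i, f i ≠ 0 ∧ IsSquare (∏ i, f i)) :
    ∑ f ∈ U, ∏ i, w (f i) ≤ 𝔼 ε : ι → ℤˣ, (∑ a ∈ S, signCharacter p ε a * w a) ^ s := by
  have hexpand : 𝔼 ε : ι → ℤˣ, (∑ a ∈ S, signCharacter p ε a * w a) ^ s =
      ∑ f ∈ Fintype.piFinset fun _ : Fin s ↦ S,
        (𝔼 ε : ι → ℤˣ, signCharacter p ε (∏ i, f i)) * ∏ i, w (f i) := by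
    simp only [sum_pow', prod_mul_distrib, ← map_prod, expect_sum_comm, expect_mul]
  have hsquare (f) (hf : f ∈ U) : 𝔼 ε : ι → ℤˣ, signCharacter p ε (∏ i, f i) = 1 := by
    simp only [signCharacter_of_isSquare p _ (hU f hf).1 (hU f hf).2, Fintype.expect_const]
  calc ∑ f ∈ U, ∏ i, w (f i)
      = ∑ f ∈ U, (𝔼 ε : ι → ℤˣ, signCharacter p ε (∏ i, f i)) * ∏ i, w (f i) :=
        sum_congr rfl fun f hf ↦ by rw [hsquare f hf, one_mul]
    _ ≤ ∑ f ∈ Fintype.piFinset fun _ : Fin s ↦ S,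
          (𝔼 ε : ι → ℤˣ, signCharacter p ε (∏ i, f i)) * ∏ i, w (f i) :=
        sum_le_sum_of_subset_of_nonneg (fun f hf ↦ Fintype.mem_piFinset.2 (hUS f hf))
          fun f _ _ ↦ mul_nonneg (expect_signCharacter_nonneg p _) (prod_nonneg fun i _ ↦ hw _)
    _ = _ := hexpand.symm

end SignCharacter
section PolynomialNorm

variable {R : Type*} [Semiring R] [Fintype R]

/-- The norm `|f| = q ^ deg f` of a nonzero polynomial over a ring with `q` elements. The zero
polynomial is given the norm `1`. -/
noncomputable def polyNorm (f : R[X]) : ℝ :=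
  (Fintype.card R : ℝ) ^ f.natDegree

theorem polyNorm_pos (f : R[X]) : 0 < polyNorm f :=
  pow_pos (Nat.cast_pos.2 Fintype.card_pos) _

theorem card_le_polyNorm {f : R[X]} (hf : 0 < f.natDegree) : (Fintype.card R : ℝ) ≤ polyNorm f :=
  le_self_pow₀ (Nat.one_le_cast.2 Fintype.card_pos) hf.ne'

theorem polyNorm_pow [NoZeroDivisors R] (f : R[X]) (k : ℕ) : polyNorm (f ^ k) = polyNorm f ^ k := by
  rw [polyNorm, polyNorm, natDegree_pow, mul_comm, pow_mul]

end PolynomialNorm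

section MonicCount

open Finset

theorem ncard_setOf_monic_natDegree_eq (R : Type*) [Ring R] [Nontrivial R] [Fintype R] (n : ℕ) :
    {f : R[X] | f.Monic ∧ f.natDegree = n}.ncard = Fintype.card R ^ n :=
  calc {f : R[X] | f.Monic ∧ f.natDegree = n}.ncard = Nat.card (Fin n → R) :=
        Nat.card_congr ((monicEquivDegreeLT n).trans (degreeLTEquiv R n).toEquiv)
    _ = Fintype.card R ^ n := by simp

theorem card_filter_natDegree_le {R : Type*} [Ring R] [Nontrivial R] [Fintype R]
    {A : Finset R[X]} (hA : ∀ f ∈ A, f.Monic) (n : ℕ) :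
    #{f ∈ A | f.natDegree = n} ≤ Fintype.card R ^ n := by
  have hncard := ncard_setOf_monic_natDegree_eq R n
  have hfinite : {f : R[X] | f.Monic ∧ f.natDegree = n}.Finite :=
    Set.finite_of_ncard_ne_zero (hncard ▸ pow_ne_zero n Fintype.card_ne_zero)
  rw [← hncard, ← Set.ncard_coe_finset, coe_filter]
  exact Set.ncard_le_ncard (fun f hf ↦ ⟨hA f hf.1, hf.2⟩) hfinite

theorem sum_Icc_one_inv_pow_le {q : ℝ} (hq : 2 ≤ q) (n : ℕ) : ∑ k ∈ Icc 1 n, (q ^ k)⁻¹ ≤ 2 / q :=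
  calc ∑ k ∈ Icc 1 n, (q ^ k)⁻¹ = q⁻¹ * ∑ k ∈ range n, q⁻¹ ^ k := by
        rw [← Ico_succ_right_eq_Icc, sum_Ico_eq_sum_range, mul_sum]
        exact sum_congr (by simp) fun k _ ↦ by rw [← inv_pow, pow_add, pow_one]
    _ ≤ q⁻¹ * ∑ k ∈ range n, (1 / 2) ^ k := by
        gcongr
        rw [one_div]
        gcongr
    _ ≤ q⁻¹ * 2 := by
        gcongr
        exact sum_geometric_two_le n
    _ = 2 / q := by ring

theorem sum_inv_polyNorm_sq_le {R : Type*} [Ring R] [Nontrivial R] [Fintype R] {A : Finset R[X]}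
    (hA : ∀ f ∈ A, f.Monic ∧ 0 < f.natDegree) :
    ∑ f ∈ A, (polyNorm f)⁻¹ ^ 2 ≤ 2 / Fintype.card R := by
  set q : ℝ := (Fintype.card R : ℝ)
  have hq2 : 2 ≤ q := Nat.ofNat_le_cast.2 Fintype.one_lt_card
  have hdeg (f) (hf : f ∈ A) : f.natDegree ∈ Icc 1 (A.sup natDegree) :=
    mem_Icc.2 ⟨(hA f hf).2, le_sup (f := natDegree) hf⟩
  rw [← sum_fiberwise_of_maps_to hdeg]
  refine (sum_le_sum fun n _ ↦ ?_).trans (sum_Icc_one_inv_pow_le hq2 _)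
  calc ∑ f ∈ A with f.natDegree = n, (polyNorm f)⁻¹ ^ 2
      = #{f ∈ A | f.natDegree = n} * (q ^ n)⁻¹ ^ 2 := by
        rw [← nsmul_eq_mul, ← sum_const]
        exact sum_congr rfl fun f hf ↦ by rw [polyNorm, (mem_filter.1 hf).2]
    _ ≤ q ^ n * (q ^ n)⁻¹ ^ 2 := by
        gcongr
        exact (Nat.cast_le.2 (card_filter_natDegree_le (fun f hf ↦ (hA f hf).1) n)).trans_eq
          (Nat.cast_pow _ _)
    _ = (q ^ n)⁻¹ := by field_simp

end MonicCount

section VonMangoldt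

open Finset

theorem eq_of_pow_eq_pow_of_monic_irreducible {F : Type*} [Field F] {P Q : F[X]} {j k : ℕ}
    (hP : P.Monic) (hPi : Irreducible P) (hQ : Q.Monic) (hQi : Irreducible Q) (hj : j ≠ 0)
    (h : P ^ j = Q ^ k) : P = Q := by
  have hdvd : P ∣ Q := hPi.prime.dvd_of_dvd_pow (h ▸ dvd_pow_self P hj)
  exact eq_of_monic_of_associated hP hQ (hPi.associated_of_dvd hQi hdvd)

theorem vonMangoldt_nonneg {F : Type} [Field F] (f : F[X]) : 0 ≤ vonMangoldt f := by
  unfold vonMangoldt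
  split_ifs <;> positivity

theorem exists_eq_pow_of_vonMangoldt_ne_zero {F : Type} [Field F] {f : F[X]}
    (hf : vonMangoldt f ≠ 0) :
    ∃ (P : F[X]) (k : ℕ), P.Monic ∧ Irreducible P ∧ 1 ≤ k ∧ f = P ^ k := by
  by_contra h
  exact hf (dif_neg h)

theorem vonMangoldt_pow {F : Type} [Field F] {P : F[X]} (hP : P.Monic) (hPi : Irreducible P)
    {k : ℕ} (hk : 1 ≤ k) : vonMangoldt (P ^ k) = P.natDegree := by
  have h : ∃ (Q : F[X]) (j : ℕ), Q.Monic ∧ Irreducible Q ∧ 1 ≤ j ∧ P ^ k = Q ^ j :=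
    ⟨P, k, hP, hPi, hk, rfl⟩
  obtain ⟨j, hQ, hQi, -, hPQ⟩ := h.choose_spec
  rw [vonMangoldt, dif_pos h,
    ← eq_of_pow_eq_pow_of_monic_irreducible hP hPi hQ hQi (Nat.one_le_iff_ne_zero.1 hk) hPQ]

variable {F : Type} [Field F] [Fintype F]

/-- The weight `Λ(f) / (|f| deg f)` of one entry of a tuple in the definition of `Hfun`. It is
the coefficient of `f` in the logarithm of the zeta function of `F[X]` at `1`. -/
noncomputable def mangoldtWeight (f : F[X]) : ℝ :=
  vonMangoldt f * (polyNorm f)⁻¹ / f.natDegree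

theorem mangoldtWeight_nonneg (f : F[X]) : 0 ≤ mangoldtWeight f :=
  div_nonneg (mul_nonneg (vonMangoldt_nonneg f) (inv_nonneg.2 (polyNorm_pos f).le))
    (Nat.cast_nonneg _)

theorem mangoldtWeight_pow {P : F[X]} (hP : P.Monic) (hPi : Irreducible P) {k : ℕ} (hk : 1 ≤ k) :
    mangoldtWeight (P ^ k) = (polyNorm P)⁻¹ ^ k / k := by
  have hdeg : (P.natDegree : ℝ) ≠ 0 := Nat.cast_ne_zero.2 hPi.natDegree_pos.ne'
  rw [mangoldtWeight, vonMangoldt_pow hP hPi hk, polyNorm_pow, natDegree_pow]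
  push_cast
  rw [inv_pow]
  field_simp

theorem mangoldtWeight_of_irreducible {P : F[X]} (hP : P.Monic) (hPi : Irreducible P) :
    mangoldtWeight P = (polyNorm P)⁻¹ := by
  simpa using mangoldtWeight_pow hP hPi le_rfl

theorem exists_eq_pow_of_mangoldtWeight_ne_zero {f : F[X]} (hf : mangoldtWeight f ≠ 0)
    (hfi : ¬Irreducible f) :
    ∃ (P : F[X]) (k : ℕ), P.Monic ∧ Irreducible P ∧ f = P ^ (k + 2) := by
  have hΛ : vonMangoldt f ≠ 0 := fun h ↦ hf (by simp [mangoldtWeight, h])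
  obtain ⟨P, k, hP, hPi, hk, rfl⟩ := exists_eq_pow_of_vonMangoldt_ne_zero hΛ
  have hk1 : k ≠ 1 := by
    rintro rfl
    exact hfi (by simpa using hPi)
  exact ⟨P, k - 2, hP, hPi, by rw [Nat.sub_add_cancel (by omega)]⟩

theorem sum_range_pow_add_two_div_le_sq {x : ℝ} (hx : 0 ≤ x) (hx2 : x ≤ 1 / 2) (n : ℕ) :
    ∑ k ∈ range n, x ^ (k + 2) / ((k + 2 : ℕ) : ℝ) ≤ x ^ 2 :=
  calc ∑ k ∈ range n, x ^ (k + 2) / ((k + 2 : ℕ) : ℝ)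
      ≤ ∑ k ∈ range n, x ^ 2 / 2 * (1 / 2) ^ k := by
        refine sum_le_sum fun k _ ↦ ?_
        calc x ^ (k + 2) / ((k + 2 : ℕ) : ℝ) ≤ x ^ (k + 2) / 2 := by
              gcongr
              exact_mod_cast Nat.le_add_left 2 k
          _ = x ^ 2 / 2 * x ^ k := by ring
          _ ≤ x ^ 2 / 2 * (1 / 2) ^ k := by gcongr
    _ = x ^ 2 / 2 * ∑ k ∈ range n, (1 / 2) ^ k := by rw [mul_sum]
    _ ≤ x ^ 2 / 2 * 2 := by
        gcongr
        exact sum_geometric_two_le n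
    _ = x ^ 2 := by ring

theorem sum_mangoldtWeight_prime_pow_le {P : F[X]} (hP : P.Monic) (hPi : Irreducible P) (n : ℕ) :
    ∑ k ∈ range n, mangoldtWeight (P ^ (k + 2)) ≤ (polyNorm P)⁻¹ ^ 2 := by
  have hq2 : (2 : ℝ) ≤ Fintype.card F := Nat.ofNat_le_cast.2 Fintype.one_lt_card
  have hnorm : (polyNorm P)⁻¹ ≤ 1 / 2 := by
    rw [one_div]
    exact inv_anti₀ two_pos (hq2.trans (card_le_polyNorm hPi.natDegree_pos))
  refine (sum_congr rfl fun k _ ↦ mangoldtWeight_pow hP hPi (by omega)).trans_le ?_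
  exact sum_range_pow_add_two_div_le_sq (inv_nonneg.2 (polyNorm_pos P).le) hnorm n

open Classical in
theorem sum_mangoldtWeight_not_irreducible_le (S : Finset F[X]) :
    ∑ f ∈ S with ¬Irreducible f, mangoldtWeight f ≤ 2 / Fintype.card F := by
  choose! P k hP hPi hPk using fun f : F[X] ↦ exists_eq_pow_of_mangoldtWeight_ne_zero (f := f)
  set T := {f ∈ S | ¬Irreducible f}.filter (mangoldtWeight · ≠ 0)
  have hT (f) (hf : f ∈ T) : mangoldtWeight f ≠ 0 ∧ ¬Irreducible f :=
    ⟨(mem_filter.1 hf).2, (mem_filter.1 (mem_filter.1 hf).1).2⟩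
  have hA (Q) (hQ : Q ∈ T.image P) : Q.Monic ∧ Irreducible Q := by
    obtain ⟨f, hf, rfl⟩ := mem_image.1 hQ
    exact ⟨hP f (hT f hf).1 (hT f hf).2, hPi f (hT f hf).1 (hT f hf).2⟩
  set pairs := T.image P ×ˢ range (T.sup k + 1)
  have hTpairs : T ⊆ pairs.image fun Qj ↦ Qj.1 ^ (Qj.2 + 2) := fun f hf ↦
    mem_image.2 ⟨(P f, k f), mem_product.2 ⟨mem_image_of_mem P hf,
      mem_range.2 (Nat.lt_succ_of_le (le_sup (f := k) hf))⟩, (hPk f (hT f hf).1 (hT f hf).2).symm⟩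
  calc ∑ f ∈ S with ¬Irreducible f, mangoldtWeight f
      = ∑ f ∈ T, mangoldtWeight f := (sum_filter_ne_zero _).symm
    _ ≤ ∑ f ∈ pairs.image fun Qj ↦ Qj.1 ^ (Qj.2 + 2), mangoldtWeight f :=
        sum_le_sum_of_subset_of_nonneg hTpairs fun f _ _ ↦ mangoldtWeight_nonneg f
    _ ≤ ∑ Qj ∈ pairs, mangoldtWeight (Qj.1 ^ (Qj.2 + 2)) :=
        sum_image_le_of_nonneg fun f _ ↦ mangoldtWeight_nonneg f
    _ = ∑ Q ∈ T.image P, ∑ j ∈ range (T.sup k + 1), mangoldtWeight (Q ^ (j + 2)) :=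
        sum_product _ _ _
    _ ≤ ∑ Q ∈ T.image P, (polyNorm Q)⁻¹ ^ 2 :=
        sum_le_sum fun Q hQ ↦ sum_mangoldtWeight_prime_pow_le (hA Q hQ).1 (hA Q hQ).2 _
    _ ≤ 2 / Fintype.card F :=
        sum_inv_polyNorm_sq_le fun Q hQ ↦ ⟨(hA Q hQ).1, (hA Q hQ).2.natDegree_pos⟩

open Classical in
theorem abs_sum_signCharacter_mul_mangoldtWeight_sub_rademacherSum_le {S : Finset F[X]}
    (hS : ∀ f ∈ S, f.Monic) (ε : {f ∈ S | Irreducible f} → ℤˣ) :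
    |∑ f ∈ S, signCharacter Subtype.val ε f * mangoldtWeight f -
      rademacherSum (fun P ↦ (polyNorm P.1)⁻¹) ε| ≤ 2 / Fintype.card F := by
  have hprimes : ∑ f ∈ S with Irreducible f, signCharacter Subtype.val ε f * mangoldtWeight f =
      rademacherSum (fun P ↦ (polyNorm P.1)⁻¹) ε := by
    rw [← sum_coe_sort]
    refine sum_congr rfl fun P _ ↦ ?_
    obtain ⟨hPS, hPi⟩ := mem_filter.1 P.2
    rw [mangoldtWeight_of_irreducible (hS P hPS) hPi, signCharacter_apply_of_irreducible
      Subtype.val_injective ε hPi (hS P hPS).normalize_eq_self]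
  rw [← sum_filter_add_sum_filter_not S Irreducible, hprimes, add_sub_cancel_left]
  calc |∑ f ∈ S with ¬Irreducible f, signCharacter Subtype.val ε f * mangoldtWeight f|
      ≤ ∑ f ∈ S with ¬Irreducible f, mangoldtWeight f := by
        refine (abs_sum_le_sum_abs _ _).trans_eq (sum_congr rfl fun f hf ↦ ?_)
        rw [abs_mul, abs_signCharacter_of_ne_zero _ _ (hS f (mem_filter.1 hf).1).ne_zero, one_mul,
          abs_of_nonneg (mangoldtWeight_nonneg f)]
    _ ≤ 2 / Fintype.card F := sum_mangoldtWeight_not_irreducible_le S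

end VonMangoldt

section SquareTuples

open Finset Real BigOperators

variable {F : Type} [Field F] [Fintype F]

theorem sum_prod_mangoldtWeight_le {z : ℝ} (hz : 0 < z) {s : ℕ} {U : Finset (Fin s → F[X])}
    (hU : ∀ f ∈ U, (∀ i, (f i).Monic) ∧ IsSquare (∏ i, f i)) :
    ∑ f ∈ U, ∏ i, mangoldtWeight (f i) ≤
      2 * (s.factorial / z ^ s * exp ((2 * z + z ^ 2) / Fintype.card F)) := by
  classical
  set S := U.biUnion fun f ↦ univ.image f
  have hUS (f) (hf : f ∈ U) (i) : f i ∈ S :=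
    mem_biUnion.2 ⟨f, hf, mem_image_of_mem f (mem_univ i)⟩
  have hS (g) (hg : g ∈ S) : g.Monic := by
    obtain ⟨f, hf, hfg⟩ := mem_biUnion.1 hg
    obtain ⟨i, -, rfl⟩ := mem_image.1 hfg
    exact (hU f hf).1 i
  have hne (f) (hf : f ∈ U) : ∏ i, f i ≠ 0 :=
    prod_ne_zero_iff.2 fun i _ ↦ ((hU f hf).1 i).ne_zero
  have hvariance : ∑ P : {f ∈ S | Irreducible f}, (polyNorm P.1)⁻¹ ^ 2 ≤ 2 / Fintype.card F := by
    rw [sum_coe_sort {f ∈ S | Irreducible f} fun P ↦ (polyNorm P)⁻¹ ^ 2]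
    refine sum_inv_polyNorm_sq_le fun P hP ↦ ?_
    obtain ⟨hPS, hPi⟩ := mem_filter.1 hP
    exact ⟨hS P hPS, hPi.natDegree_pos⟩
  calc ∑ f ∈ U, ∏ i, mangoldtWeight (f i)
      ≤ 𝔼 ε : {f ∈ S | Irreducible f} → ℤˣ,
          (∑ f ∈ S, signCharacter Subtype.val ε f * mangoldtWeight f) ^ s :=
        sum_prod_le_expect_sum_signCharacter_pow _ mangoldtWeight_nonneg hUS
          fun f hf ↦ ⟨hne f hf, (hU f hf).2⟩
    _ ≤ 2 * (s.factorial / z ^ s * exp (z * (2 / Fintype.card F) +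
          z ^ 2 * (∑ P : {f ∈ S | Irreducible f}, (polyNorm P.1)⁻¹ ^ 2) / 2)) :=
        expect_pow_le_of_abs_sub_rademacherSum_le hz
          (abs_sum_signCharacter_mul_mangoldtWeight_sub_rademacherSum_le hS) s
    _ ≤ 2 * (s.factorial / z ^ s * exp (z * (2 / Fintype.card F) +
          z ^ 2 * (2 / Fintype.card F) / 2)) := by gcongr
    _ = _ := by ring_nf

theorem finprod_mem_inv_one_add_inv_polyNorm_mem_Icc (T : Set F[X]) :
    ∏ᶠ P ∈ T, (1 + (polyNorm P)⁻¹)⁻¹ ∈ Set.Icc (0 : ℝ) 1 := by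
  refine finprod_mem_induction (· ∈ Set.Icc (0 : ℝ) 1) ⟨zero_le_one, le_rfl⟩
    (fun a b ha hb ↦ ⟨mul_nonneg ha.1 hb.1, mul_le_one₀ ha.2 hb.1 hb.2⟩) fun P _ ↦ ?_
  have hP := inv_pos.2 (polyNorm_pos P)
  exact ⟨by positivity, inv_le_one_of_one_le₀ (le_add_of_nonneg_right hP.le)⟩

theorem Hfun_le_of_pos {z : ℝ} (hz : 0 < z) (s : ℕ) :
    Hfun F s ≤ 2 * (s.factorial / z ^ s * exp ((2 * z + z ^ 2) / Fintype.card F)) := by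
  have hweight (f : Fin s → F[X]) : 0 ≤ ∏ i, mangoldtWeight (f i) :=
    prod_nonneg fun i _ ↦ mangoldtWeight_nonneg (f i)
  have hfactor := finprod_mem_inv_one_add_inv_polyNorm_mem_Icc (F := F)
  refine Real.tsum_le_of_sum_le (fun f ↦ mul_nonneg (hweight f.1) (hfactor _).1) fun U ↦ ?_
  calc _ ≤ ∑ f ∈ U, ∏ i, mangoldtWeight (f.1 i) :=
        sum_le_sum fun f _ ↦ mul_le_of_le_one_right (hweight f.1) (hfactor _).2
    _ = ∑ f ∈ U.map (Function.Embedding.subtype _), ∏ i, mangoldtWeight (f i) :=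
        (sum_map U (.subtype _) fun f ↦ ∏ i, mangoldtWeight (f i)).symm
    _ ≤ _ := by
        refine sum_prod_mangoldtWeight_le hz fun f hf ↦ ?_
        obtain ⟨g, -, rfl⟩ := mem_map.1 hf
        exact ⟨fun i ↦ (g.2.1 i).1, g.2.2⟩

theorem Hfun_le (F : Type) [Field F] [Fintype F] {s : ℕ} (hs : 1 ≤ s) :
    Hfun F s ≤ 2 * (exp 3 * √s / √(Fintype.card F)) ^ s := by
  set q : ℝ := (Fintype.card F : ℝ)
  have hq : 1 ≤ q := Nat.one_le_cast.2 Fintype.card_pos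
  have hs1 : (1 : ℝ) ≤ s := Nat.one_le_cast.2 hs
  have hz : √(s * q) ≤ s * q :=
    Real.sqrt_le_self_iff.2 (Or.inr (one_le_mul_of_one_le_of_one_le hs1 hq))
  have hexponent : (2 * √(s * q) + √(s * q) ^ 2) / q ≤ s * 3 := by
    rw [sq_sqrt (by positivity), div_le_iff₀ (by positivity)]
    linarith
  have hfactorial : (s.factorial : ℝ) ≤ (s : ℝ) ^ s := mod_cast s.factorial_le_pow
  have hbase : s / √(s * q) = √s / √q := by
    rw [sqrt_mul (by positivity), ← div_div, div_sqrt]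
  calc Hfun F s
      ≤ 2 * (s.factorial / √(s * q) ^ s * exp ((2 * √(s * q) + √(s * q) ^ 2) / q)) :=
        Hfun_le_of_pos (by positivity) s
    _ ≤ 2 * ((s : ℝ) ^ s / √(s * q) ^ s * exp (s * 3)) := by gcongr
    _ = 2 * (exp 3 * √s / √q) ^ s := by
        rw [exp_nat_mul, ← div_pow, ← mul_pow, hbase, mul_comm (√s / √q), mul_div_assoc]

end SquareTuples

section Comparison

open Real Asymptotics Filter

theorem eventually_mul_sqrt_le_div_log {c : ℝ} (hc : 0 < c) :
    ∀ᶠ x : ℝ in atTop, c * √x ≤ 4 * x * log (log x) / log x := by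
  have hlog : ∀ᶠ x : ℝ in atTop, ‖log x‖ ≤ 4 / c * ‖x ^ (1 / 2 : ℝ)‖ :=
    (isLittleO_log_rpow_atTop one_half_pos).bound (by positivity)
  have hloglog : ∀ᶠ x : ℝ in atTop, 1 ≤ log (log x) :=
    (tendsto_log_atTop.comp tendsto_log_atTop).eventually_ge_atTop 1
  filter_upwards [hlog, hloglog, eventually_gt_atTop 1] with x hlog hloglog hx
  have hlog_pos : 0 < log x := log_pos hx
  rw [← sqrt_eq_rpow, norm_of_nonneg hlog_pos.le, norm_of_nonneg (sqrt_nonneg x)] at hlog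
  rw [le_div_iff₀ hlog_pos]
  calc c * √x * log x ≤ c * √x * (4 / c * √x) := by gcongr
    _ = 4 * √x ^ 2 := by field_simp
    _ = 4 * x := by rw [sq_sqrt (by positivity)]
    _ ≤ 4 * x * log (log x) := le_mul_of_one_le_right (by positivity) hloglog

theorem one_lt_log_natCast {s : ℕ} (hs : 3 ≤ s) : 1 < log s := by
  rw [lt_log_iff_exp_lt (by positivity)]
  exact exp_one_lt_three.trans_le (mod_cast hs)

theorem exists_forall_mul_sqrt_pow_le {c : ℝ} (hc : 0 < c) : ∃ C : ℝ, 0 < C ∧ ∀ s : ℕ, 3 ≤ s →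
    (c * √s) ^ s ≤ C * (4 * s * log (log s) / log s) ^ s := by
  have hbigO : (fun s : ℕ ↦ (c * √s) ^ s) =O[atTop]
      fun s : ℕ ↦ (4 * s * log (log s) / log s) ^ s := by
    refine IsBigO.of_bound' ?_
    filter_upwards [tendsto_natCast_atTop_atTop.eventually (eventually_mul_sqrt_le_div_log hc)]
      with s hs
    rw [norm_pow, norm_pow, norm_of_nonneg (by positivity)]
    exact pow_le_pow_left₀ (by positivity) (hs.trans (le_norm_self _)) s
  obtain ⟨C, hC, hbound⟩ := bound_of_isBigO_nat_atTop hbigO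
  refine ⟨C, hC, fun s hs ↦ ?_⟩
  have hlog := one_lt_log_natCast hs
  have hloglog := log_pos hlog
  have hpos : 0 < 4 * s * log (log s) / log s := by positivity
  have hsqrt : 0 ≤ (c * √s) ^ s := by positivity
  simpa only [norm_of_nonneg (pow_pos hpos s).le, norm_of_nonneg hsqrt] using
    hbound (pow_pos hpos s).ne'

end Comparison

/-- There is an absolute constant `C > 0` such that for every prime power `q`
(realized as the cardinality of a finite field `Fq`) and every integer `s ≥ 4`, one has
`H(s) ≤ C (4 s log log s / (√q log s))^s`. -/
theorem Hfun_upper_bound :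
    ∃ C : ℝ, 0 < C ∧
      ∀ (Fq : Type) [Field Fq] [Fintype Fq], ∀ s : ℕ, 4 ≤ s →
        Hfun Fq s ≤ C * (4 * s * Real.log (Real.log s) /
            (Real.sqrt (Fintype.card Fq) * Real.log s)) ^ s := by
  obtain ⟨C, hC, hcompare⟩ := exists_forall_mul_sqrt_pow_le (Real.exp_pos 3)
  refine ⟨2 * C, by positivity, fun Fq _ _ s hs ↦ ?_⟩
  calc Hfun Fq s
      ≤ 2 * ((Real.exp 3 * √s) ^ s / √(Fintype.card Fq) ^ s) := by
        rw [← div_pow]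
        exact Hfun_le Fq (by omega)
    _ ≤ 2 * (C * (4 * s * Real.log (Real.log s) / Real.log s) ^ s / √(Fintype.card Fq) ^ s) := by
        gcongr
        exact hcompare s (by omega)
    _ = 2 * C * (4 * s * Real.log (Real.log s) / (√(Fintype.card Fq) * Real.log s)) ^ s := by
        rw [mul_div_assoc, ← div_pow, div_div, mul_comm (Real.log s), mul_assoc 2 C]
end

section
/- For every prime power q and every integer λ ≥ 2, one has h(2 + λ) < h(2) · h(λ). -/
/-!
Write `t_l(P) = u_P ^ l + (-v_P) ^ l`, where `0 < v_P < u_P`. The product `t_2(P) t_l(P)` exceeds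
`t_{2+l}(P)` by `u_P² v_P² t_{l-2}(P) ≥ 0`, so the sum of the `t_{2+l}(P)` is at most the diagonal
part of `h(2) h(l)`. All terms are positive and there are at least two monic irreducibles, hence
the off-diagonal part is positive and the inequality is strict.

Convergence comes from `u_P ≤ 2|P|⁻¹` and the `q ^ d` monic polynomials of degree `d`.
-/

open Polynomial

/-- `u_P = -log(1 - |P|⁻¹)` where `|P| = q^(deg P)`. -/
noncomputable def uP {Fq : Type} [Field Fq] [Fintype Fq] (P : Polynomial Fq) : ℝ :=
  -Real.log (1 - ((Fintype.card Fq : ℝ) ^ P.natDegree)⁻¹)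

/-- `v_P = log(1 + |P|⁻¹)` where `|P| = q^(deg P)`. -/
noncomputable def vP {Fq : Type} [Field Fq] [Fintype Fq] (P : Polynomial Fq) : ℝ :=
  Real.log (1 + ((Fintype.card Fq : ℝ) ^ P.natDegree)⁻¹)

/-- `h(λ) = ∑_P (u_P^λ + (-1)^λ v_P^λ)`, the sum over all monic irreducible
polynomials `P ∈ Fq[X]`. -/
noncomputable def hfun (Fq : Type) [Field Fq] [Fintype Fq] (l : ℕ) : ℝ :=
  ∑' P : {P : Polynomial Fq // P.Monic ∧ Irreducible P},
    (uP P.1 ^ l + (-1 : ℝ) ^ l * vP P.1 ^ l)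

section PowerSums

variable {R : Type*} [CommRing R] [LinearOrder R] [IsStrictOrderedRing R] {u w : R}

lemma pow_add_pow_nonneg_of_abs_le (h : |w| ≤ u) (n : ℕ) : 0 ≤ u ^ n + w ^ n := by
  have hw : -w ^ n ≤ u ^ n := calc
    -w ^ n ≤ |w ^ n| := neg_le_abs _
    _ = |w| ^ n := abs_pow w n
    _ ≤ u ^ n := pow_le_pow_left₀ (abs_nonneg w) h n
  exact neg_le_iff_add_nonneg.mp hw

lemma pow_add_pow_pos_of_abs_lt (h : |w| < u) (n : ℕ) : 0 < u ^ n + w ^ n := by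
  rcases eq_or_ne n 0 with rfl | hn
  · simp [one_add_one_eq_two]
  have hw : -w ^ n < u ^ n := calc
    -w ^ n ≤ |w ^ n| := neg_le_abs _
    _ = |w| ^ n := abs_pow w n
    _ < u ^ n := pow_lt_pow_left₀ h (abs_nonneg w) hn
  exact neg_lt_iff_pos_add.mp hw

lemma pow_two_add_add_pow_two_add_le (h : |w| ≤ u) {n : ℕ} (hn : 2 ≤ n) :
    u ^ (2 + n) + w ^ (2 + n) ≤ (u ^ 2 + w ^ 2) * (u ^ n + w ^ n) := by
  obtain ⟨k, rfl⟩ := Nat.exists_eq_add_of_le hn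
  have gap_nonneg : 0 ≤ u ^ 2 * w ^ 2 * (u ^ k + w ^ k) :=
    mul_nonneg (by positivity) (pow_add_pow_nonneg_of_abs_le h k)
  calc u ^ (2 + (2 + k)) + w ^ (2 + (2 + k))
      ≤ u ^ (2 + (2 + k)) + w ^ (2 + (2 + k)) + u ^ 2 * w ^ 2 * (u ^ k + w ^ k) :=
        le_add_of_nonneg_right gap_nonneg
    _ = (u ^ 2 + w ^ 2) * (u ^ (2 + k) + w ^ (2 + k)) := by ring

end PowerSums

section Series

variable {ι : Type*}

lemma summable_pow_of_summable_pow_of_le {f : ι → ℝ} (hf : ∀ i, 0 ≤ f i) {m n : ℕ} (hmn : m ≤ n)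
    (hm : Summable fun i => f i ^ m) : Summable fun i => f i ^ n := by
  refine Summable.of_norm_bounded_eventually hm ?_
  filter_upwards [hm.tendsto_cofinite_zero.eventually_lt_const one_pos] with i hi
  have hf_lt_one : f i < 1 := lt_of_pow_lt_pow_left₀ m zero_le_one (by rwa [one_pow])
  rw [Real.norm_of_nonneg (pow_nonneg (hf i) n)]
  exact pow_le_pow_of_le_one (hf i) hf_lt_one.le hmn

lemma lt_tsum_of_pos [Nontrivial ι] {f : ι → ℝ} (hf : Summable f) (hpos : ∀ i, 0 < f i) (i : ι) :
    f i < ∑' j, f j := by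
  classical
  obtain ⟨j, hji⟩ := exists_ne i
  calc f i < f j + f i := lt_add_of_pos_left _ (hpos j)
    _ = ∑ k ∈ {j, i}, f k := (Finset.sum_pair hji).symm
    _ ≤ ∑' k, f k := hf.sum_le_tsum _ fun k _ => (hpos k).le

lemma tsum_lt_tsum_mul_tsum_of_le_mul [Nontrivial ι] {f g h : ι → ℝ} (hf : Summable f)
    (hg : Summable g) (hh : Summable h) (hf_pos : ∀ i, 0 < f i) (hg_pos : ∀ i, 0 < g i)
    (hle : ∀ i, h i ≤ f i * g i) : ∑' i, h i < (∑' i, f i) * ∑' i, g i := by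
  have hlt (i : ι) : h i < (∑' j, f j) * g i :=
    (hle i).trans_lt (mul_lt_mul_of_pos_right (lt_tsum_of_pos hf hf_pos i) (hg_pos i))
  obtain ⟨i⟩ := ‹Nontrivial ι›.to_nonempty
  calc ∑' i, h i < ∑' i, (∑' j, f j) * g i :=
        hh.tsum_lt_tsum (fun i => (hlt i).le) (hlt i) (hg.mul_left _)
    _ = (∑' i, f i) * ∑' i, g i := tsum_mul_left

variable {u w : ι → ℝ}

lemma summable_pow_add_pow_of_abs_le (h : ∀ i, |w i| ≤ u i) {m n : ℕ} (hmn : m ≤ n)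
    (hu : Summable fun i => u i ^ m) : Summable fun i => u i ^ n + w i ^ n := by
  have hun : Summable fun i => u i ^ n :=
    summable_pow_of_summable_pow_of_le (fun i => (abs_nonneg _).trans (h i)) hmn hu
  refine hun.add (hun.of_norm_bounded fun i => ?_)
  rw [norm_pow, Real.norm_eq_abs]
  exact pow_le_pow_left₀ (abs_nonneg _) (h i) n

theorem tsum_pow_two_add_lt_mul [Nontrivial ι] (h : ∀ i, |w i| < u i)
    (hu : Summable fun i => u i ^ 2) {n : ℕ} (hn : 2 ≤ n) :
    ∑' i, (u i ^ (2 + n) + w i ^ (2 + n)) <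
      (∑' i, (u i ^ 2 + w i ^ 2)) * ∑' i, (u i ^ n + w i ^ n) := by
  have hsum {m : ℕ} (hm : 2 ≤ m) : Summable fun i => u i ^ m + w i ^ m :=
    summable_pow_add_pow_of_abs_le (fun i => (h i).le) hm hu
  exact tsum_lt_tsum_mul_tsum_of_le_mul (hsum le_rfl) (hsum hn) (hsum le_self_add)
    (fun i => pow_add_pow_pos_of_abs_lt (h i) 2) (fun i => pow_add_pow_pos_of_abs_lt (h i) n)
    fun i => pow_two_add_add_pow_two_add_le (h i).le hn

end Series

lemma log_one_add_lt_neg_log_one_sub {x : ℝ} (hx₀ : 0 < x) (hx₁ : x < 1) :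
    Real.log (1 + x) < -Real.log (1 - x) := by
  have hprod : (1 + x) * (1 - x) < 1 := calc
    (1 + x) * (1 - x) = 1 - x ^ 2 := by ring
    _ < 1 := sub_lt_self 1 (pow_pos hx₀ 2)
  have hlog : Real.log ((1 + x) * (1 - x)) < 0 :=
    Real.log_neg (mul_pos (by linarith) (sub_pos.mpr hx₁)) hprod
  rw [Real.log_mul (by linarith) (by linarith)] at hlog
  linarith

lemma neg_log_one_sub_le_two_mul {x : ℝ} (hx₀ : 0 ≤ x) (hx : x ≤ 1 / 2) :
    -Real.log (1 - x) ≤ 2 * x := calc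
  -Real.log (1 - x) ≤ (1 - x)⁻¹ - 1 := by
    linarith [Real.one_sub_inv_le_log_of_pos (show 0 < 1 - x by linarith)]
  _ ≤ 2 * x := by
    rw [sub_le_iff_le_add, inv_le_iff_one_le_mul₀ (by linarith)]
    linarith [show (2 * x + 1) * (1 - x) = 1 + x * (1 - 2 * x) by ring,
      mul_nonneg hx₀ (show 0 ≤ 1 - 2 * x by linarith)]

section MonicPolynomials

lemma monic_natDegree_coeff_injective (R : Type*) [Semiring R] :
    Function.Injective fun P : {P : R[X] // P.Monic} =>
      (⟨P.1.natDegree, fun i => P.1.coeff i⟩ : Σ d, Fin d → R) := by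
  let ofCoeffs : (Σ d, Fin d → R) → R[X] := fun c => X ^ c.1 + ∑ i, C (c.2 i) * X ^ (i : ℕ)
  refine Function.Injective.of_comp (f := ofCoeffs) ?_
  convert (Subtype.val_injective : Function.Injective (Subtype.val : {P : R[X] // P.Monic} → R[X]))
    using 1
  funext P
  simp only [ofCoeffs, Function.comp_apply]
  rw [Fin.sum_univ_eq_sum_range (fun i => C (P.1.coeff i) * X ^ i)]
  exact P.2.as_sum.symm

lemma summable_pow_fst_sigma_fin (α : Type*) [Fintype α] {r : ℝ} (hr₀ : 0 ≤ r)
    (hr : Fintype.card α * r < 1) : Summable fun c : Σ d, Fin d → α => r ^ c.1 := by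
  refine (summable_sigma_of_nonneg fun c => pow_nonneg hr₀ c.1).mpr
    ⟨fun d => Summable.of_finite, ?_⟩
  simpa [mul_pow] using summable_geometric_of_lt_one (by positivity) hr

lemma summable_pow_natDegree_monic (R : Type*) [Semiring R] [Fintype R] {r : ℝ} (hr₀ : 0 ≤ r)
    (hr : Fintype.card R * r < 1) :
    Summable fun P : {P : R[X] // P.Monic} => r ^ P.1.natDegree := by
  have hsum := (summable_pow_fst_sigma_fin R hr₀ hr).comp_injective
    (monic_natDegree_coeff_injective R)
  exact hsum

instance nontrivial_monic_irreducible (R : Type*) [CommRing R] [IsDomain R] :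
    Nontrivial {P : R[X] // P.Monic ∧ Irreducible P} := by
  let linear (a : R) : {P : R[X] // P.Monic ∧ Irreducible P} :=
    ⟨X - C a, monic_X_sub_C a, irreducible_X_sub_C a⟩
  have hlinear : Function.Injective linear := fun a b hab =>
    C_injective (sub_right_injective (congrArg Subtype.val hab))
  exact hlinear.nontrivial

end MonicPolynomials

section FiniteField

variable {Fq : Type} [Field Fq] [Fintype Fq]

lemma inv_card_pow_natDegree_le_half {P : Fq[X]} (hP : Irreducible P) :
    ((Fintype.card Fq : ℝ) ^ P.natDegree)⁻¹ ≤ 1 / 2 := by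
  have hq : (2 : ℝ) ≤ Fintype.card Fq := by exact_mod_cast Fintype.one_lt_card (α := Fq)
  rw [one_div]
  exact inv_anti₀ two_pos
    (hq.trans (le_self_pow₀ (one_le_two.trans hq) hP.natDegree_pos.ne'))

lemma abs_neg_vP_lt_uP {P : Fq[X]} (hP : Irreducible P) : |-vP P| < uP P := by
  have hx₀ : 0 < ((Fintype.card Fq : ℝ) ^ P.natDegree)⁻¹ := by positivity
  have hx₁ := inv_card_pow_natDegree_le_half hP
  have hv : 0 ≤ vP P := Real.log_nonneg (by linarith)
  rw [abs_neg, abs_of_nonneg hv]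
  exact log_one_add_lt_neg_log_one_sub hx₀ (by linarith)

lemma uP_le_two_mul {P : Fq[X]} (hP : Irreducible P) :
    uP P ≤ 2 * ((Fintype.card Fq : ℝ) ^ P.natDegree)⁻¹ :=
  neg_log_one_sub_le_two_mul (by positivity) (inv_card_pow_natDegree_le_half hP)

variable (Fq) in
lemma summable_inv_card_pow_natDegree_sq :
    Summable fun P : {P : Fq[X] // P.Monic} =>
      (((Fintype.card Fq : ℝ) ^ P.1.natDegree)⁻¹) ^ 2 := by
  have hq : (1 : ℝ) < Fintype.card Fq := by exact_mod_cast Fintype.one_lt_card (α := Fq)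
  have hr : (Fintype.card Fq : ℝ) * ((Fintype.card Fq : ℝ)⁻¹) ^ 2 < 1 := by
    rw [sq, mul_inv_cancel_left₀ (by positivity)]
    exact inv_lt_one_of_one_lt₀ hq
  refine (summable_pow_natDegree_monic Fq (by positivity) hr).congr fun P => ?_
  rw [← inv_pow, ← pow_mul, ← pow_mul, mul_comm]

variable (Fq) in
lemma summable_uP_sq :
    Summable fun P : {P : Fq[X] // P.Monic ∧ Irreducible P} => uP P.1 ^ 2 := by
  have hforget : Function.Injective fun P : {P : Fq[X] // P.Monic ∧ Irreducible P} =>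
      (⟨P.1, P.2.1⟩ : {P : Fq[X] // P.Monic}) := fun P Q hPQ =>
    Subtype.ext (Subtype.mk.inj hPQ)
  have hsum := ((summable_inv_card_pow_natDegree_sq Fq).comp_injective hforget).mul_left (2 ^ 2)
  refine hsum.of_nonneg_of_le (fun P => sq_nonneg _) fun P => ?_
  have hu : 0 ≤ uP P.1 := (abs_nonneg _).trans (abs_neg_vP_lt_uP P.2.2).le
  calc uP P.1 ^ 2 ≤ (2 * ((Fintype.card Fq : ℝ) ^ P.1.natDegree)⁻¹) ^ 2 :=
        pow_le_pow_left₀ hu (uP_le_two_mul P.2.2) 2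
    _ = 2 ^ 2 * (((Fintype.card Fq : ℝ) ^ P.1.natDegree)⁻¹) ^ 2 := mul_pow _ _ 2

variable (Fq) in
lemma hfun_eq_tsum_pow_add_neg_pow (l : ℕ) :
    hfun Fq l = ∑' P : {P : Fq[X] // P.Monic ∧ Irreducible P}, (uP P.1 ^ l + (-vP P.1) ^ l) :=
  tsum_congr fun P => by rw [neg_pow (vP P.1)]

end FiniteField

/-- For every prime power `q` (realized as the cardinality of a finite field `Fq`)
and every integer `λ ≥ 2`, one has `h(2 + λ) < h(2) h(λ)`. -/
theorem hfun_two_add_lt (Fq : Type) [Field Fq] [Fintype Fq] (l : ℕ) (hl : 2 ≤ l) :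
    hfun Fq (2 + l) < hfun Fq 2 * hfun Fq l := by
  simp only [hfun_eq_tsum_pow_add_neg_pow]
  exact tsum_pow_two_add_lt_mul (fun P => abs_neg_vP_lt_uP P.2.2) (summable_uP_sq Fq) hl
end
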